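/- Let ℓ be a prime number and let G be a subgroup of GL(2, ℤ_ℓ) that maps surjectively onto GL(2, 𝔽_ℓ) under the reduction-mod-ℓ homomorphism. Then for every positive integer n, a 2×2 matrix over ℤ/ℓⁿ commutes with the reduction modulo ℓⁿ of every element of G if and only if it is a scalar matrix; that is, the centralizer of the image of G in Mat₂(ℤ/ℓⁿ) equals (ℤ/ℓⁿ)·Id. (Lemma 4.4 of the paper.) -/

import Mathlib

/-!
Only two elements of `G` are needed: lifts `g`, `g'` of the elementary matrices `(1 1; 0 1)` and
`(1 0; 1 1)`. Write `b, c` and `b', c'` for their off-diagonal entries. If `M = (x y; z w)` commutes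
with both, the upper left entries give `c y = b z` and `c' y = b' z`, a linear system in `(y, z)` of
determinant `b c' - b' c` up to sign. That determinant is `1` modulo `ℓ`, hence a unit, so
`y = z = 0`. The upper right entry then gives `b (x - w) = 0` with `b` a unit, so `x = w`.
-/

open scoped MatrixGroups

lemma isUnit_of_toZMod_eq_one {ℓ : ℕ} [Fact (Nat.Prime ℓ)] {x : PadicInt ℓ}
    (h : PadicInt.toZMod (p := ℓ) x = 1) : IsUnit x := by
  by_contra hx
  have hm : x ∈ IsLocalRing.maximalIdeal (PadicInt ℓ) := hx
  rw [← PadicInt.ker_toZMod, RingHom.mem_ker, h] at hm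
  exact one_ne_zero hm

/-- Lemma 4.4: Let `G ⊆ GL(2, ℤ_ℓ)` be a subgroup mapping surjectively onto `GL(2, 𝔽_ℓ)`.
Then for every `n ≥ 1` the centralizer of the image of `G` in `Mat₂(ℤ/ℓⁿ)` consists
exactly of the scalar matrices. -/
theorem stmt0 (ℓ : ℕ) [Fact (Nat.Prime ℓ)]
    (G : Subgroup (GL (Fin 2) (PadicInt ℓ)))
    (hG : ∀ h : GL (Fin 2) (ZMod ℓ), ∃ g ∈ G,
      Matrix.GeneralLinearGroup.map (PadicInt.toZMod (p := ℓ)) g = h)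
    (n : ℕ) (hn : 0 < n) (M : Matrix (Fin 2) (Fin 2) (ZMod (ℓ ^ n))) :
    (∀ g ∈ G,
        M * ((Matrix.GeneralLinearGroup.map (PadicInt.toZModPow (p := ℓ) n) g :
            GL (Fin 2) (ZMod (ℓ ^ n))) : Matrix (Fin 2) (Fin 2) (ZMod (ℓ ^ n))) =
        ((Matrix.GeneralLinearGroup.map (PadicInt.toZModPow (p := ℓ) n) g :
            GL (Fin 2) (ZMod (ℓ ^ n))) : Matrix (Fin 2) (Fin 2) (ZMod (ℓ ^ n))) * M) ↔
      ∃ c : ZMod (ℓ ^ n), M = c • (1 : Matrix (Fin 2) (Fin 2) (ZMod (ℓ ^ n))) := by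
  constructor
  · intro hM
    obtain ⟨g, hgG, hg⟩ := hG
      (Matrix.GeneralLinearGroup.mkOfDetNeZero !![1, 1; 0, 1] (by simp [Matrix.det_fin_two]))
    obtain ⟨g', hgG', hg'⟩ := hG
      (Matrix.GeneralLinearGroup.mkOfDetNeZero !![1, 0; 1, 1] (by simp [Matrix.det_fin_two]))
    have e (i j : Fin 2) : PadicInt.toZMod (g i j) = !![1, 1; (0 : ZMod ℓ), 1] i j :=
      congrArg (fun A : GL (Fin 2) (ZMod ℓ) => A i j) hg
    have e' (i j : Fin 2) : PadicInt.toZMod (g' i j) = !![1, (0 : ZMod ℓ); 1, 1] i j :=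
      congrArg (fun A : GL (Fin 2) (ZMod ℓ) => A i j) hg'
    have hb : IsUnit (g 0 1) := isUnit_of_toZMod_eq_one (by simp [e])
    have hd : IsUnit (g 0 1 * g' 1 0 - g' 0 1 * g 1 0) :=
      isUnit_of_toZMod_eq_one (by simp [e, e'])
    have hb := hb.map (PadicInt.toZModPow (p := ℓ) n)
    have hd := hd.map (PadicInt.toZModPow (p := ℓ) n)
    simp only [map_sub, map_mul] at hd
    have h := hM g hgG
    have h' := hM g' hgG'
    have h00 := congrFun (congrFun h 0) 0
    have h01 := congrFun (congrFun h 0) 1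
    have h00' := congrFun (congrFun h' 0) 0
    simp only [Matrix.mul_apply, Fin.sum_univ_two, Matrix.GeneralLinearGroup.map_apply]
      at h00 h01 h00'
    have hy : M 0 1 = 0 := by
      apply hd.mul_left_cancel
      linear_combination PadicInt.toZModPow (p := ℓ) n (g 0 1) * h00' -
        PadicInt.toZModPow (p := ℓ) n (g' 0 1) * h00
    have hz : M 1 0 = 0 := by
      apply hb.mul_left_cancel
      linear_combination -h00 + PadicInt.toZModPow (p := ℓ) n (g 1 0) * hy
    have hxw : M 0 0 = M 1 1 := by
      apply hb.mul_left_cancel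
      linear_combination h01 + (PadicInt.toZModPow (p := ℓ) n (g 0 0) -
        PadicInt.toZModPow (p := ℓ) n (g 1 1)) * hy
    refine ⟨M 1 1, ?_⟩
    ext i j
    fin_cases i <;> fin_cases j <;> simp [hy, hz, hxw]
  · rintro ⟨c, rfl⟩ g -
    simp
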